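/- Let q be the Kronig–Penney potential, let n ≥ 1 satisfy Condition 1, let λ_n be a Dirichlet eigenvalue of L(q) with |λ_n − n²| ≤ M, and let Ψ_n be a corresponding eigenfunction with ∫₀^π |Ψ_n(x)|² dx = 1. Then R_m(λ_n) → 0 as m → ∞, where for m ≥ 1, R_m(λ_n) = Σ_{(n_1,…,n_m) ∈ ℤ^m} C_{n_1}⋯C_{n_m} · (∫₀^π q(x)Ψ_n(x) sin((n + n_1 + ⋯ + n_m)x) dx) / Π_{j=1}^m ( λ_n − (n + n_1 + ⋯ + n_j)² ), the sum restricted to indices with n_1 + ⋯ + n_s ∉ {0, −2n} for every s = 1,…,m. -/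

import Mathlib

open MeasureTheory Filter Asymptotics

/-- Cosine Fourier coefficients `C_k = (1/π) ∫₀^π q(x) cos(kx) dx` of a real potential. -/
noncomputable def cosCoefR (q : ℝ → ℝ) (k : ℤ) : ℝ :=
  (1 / Real.pi) * ∫ x in (0:ℝ)..Real.pi, q x * Real.cos ((k : ℝ) * x)

/-- `λ` is a Dirichlet eigenvalue of `L(q) = −d²/dx² + q` on `[0,π]` with eigenfunction `y`:
`y` is nontrivial, `y, y′` are absolutely continuous, `−y″ + q y = λ y` a.e. and
`y(0) = y(π) = 0`.  Absolute continuity and the a.e. differential equation are expressed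
in their equivalent integral form. -/
def IsDirichletEigenpair (q : ℝ → ℂ) (lam : ℂ) (y : ℝ → ℂ) : Prop :=
  ∃ g : ℝ → ℂ,
    (∃ x ∈ Set.Icc (0:ℝ) Real.pi, y x ≠ 0) ∧
    IntervalIntegrable g volume 0 Real.pi ∧
    IntervalIntegrable (fun t => (q t - lam) * y t) volume 0 Real.pi ∧
    (∀ x ∈ Set.Icc (0:ℝ) Real.pi, y x = y 0 + ∫ t in (0:ℝ)..x, g t) ∧
    (∀ x ∈ Set.Icc (0:ℝ) Real.pi, g x = g 0 + ∫ t in (0:ℝ)..x, (q t - lam) * y t) ∧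
    y 0 = 0 ∧ y Real.pi = 0

/-- `λ` is a Dirichlet eigenvalue of `L(q)` on `[0,π]`. -/
def IsDirichletEV (q : ℝ → ℂ) (lam : ℂ) : Prop :=
  ∃ y : ℝ → ℂ, IsDirichletEigenpair q lam y

/-- Condition 1 for the index `n`: `M ≤ 1/2` if `n = 1`, and `M < (2n−1)/2` if `n > 1`. -/
def Cond1 (M : ℝ) (n : ℕ) : Prop :=
  (n = 1 → M ≤ 1 / 2) ∧ (1 < n → M < (2 * (n : ℝ) - 1) / 2)

/-- The partial sum `n_1 + ⋯ + n_{j}` of the multi-index `v = (n_1, …, n_k)`. -/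
def psum {k : ℕ} (v : Fin k → ℤ) (j : Fin k) : ℤ :=
  ∑ i ∈ Finset.univ.filter (fun i => i ≤ j), v i

/-- Admissibility of a multi-index: every partial sum avoids `0` and `−2n`. -/
def adm (n : ℕ) {k : ℕ} (v : Fin k → ℤ) : Prop :=
  ∀ j : Fin k, psum v j ≠ 0 ∧ psum v j ≠ -(2 * (n : ℤ))

instance (n : ℕ) {k : ℕ} (v : Fin k → ℤ) : Decidable (adm n v) := by
  unfold adm; infer_instance

/-- The general term of `a_k(λ)`:
`C_{n_1}⋯C_{n_k}(C_{n_1+⋯+n_k} − C_{n_1+⋯+n_k+2n}) / Π_j (λ − (n+n_1+⋯+n_j)²)`. -/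
noncomputable def aTerm (C : ℤ → ℝ) (n : ℕ) (k : ℕ) (lam : ℝ) (v : Fin k → ℤ) : ℝ :=
  if adm n v then
    ((∏ i, C (v i)) * (C (∑ i, v i) - C ((∑ i, v i) + 2 * n))) /
      ∏ j, (lam - ((n : ℝ) + ((psum v j : ℤ) : ℝ))^2)
  else 0

/-- `a_k(λ)`, the full series over `ℤ^k` of admissible multi-indices. -/
noncomputable def aSum (C : ℤ → ℝ) (n k : ℕ) (lam : ℝ) : ℝ :=
  ∑' v : Fin k → ℤ, aTerm C n k lam v

/-- The truncated sum `a_{r,k,n}(λ)`, over multi-indices with entries in `[−r, r]`. -/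
noncomputable def aTrunc (C : ℤ → ℝ) (n k r : ℕ) (lam : ℝ) : ℝ :=
  ∑' v : Fin k → ℤ,
    if ∀ i, -(r : ℤ) ≤ v i ∧ v i ≤ (r : ℤ) then aTerm C n k lam v else 0

/-- `g_n(λ) = −C_{2n} + Σ_{k=1}^{s} a_{r,k,n}(λ)`. -/
noncomputable def gFun (C : ℤ → ℝ) (n r s : ℕ) (lam : ℝ) : ℝ :=
  -C (2 * n) + ∑ k ∈ Finset.Icc 1 s, aTrunc C n k r lam

/-- The general term of `R_m(λ)`:
`C_{n_1}⋯C_{n_m} (∫₀^π q Ψ sin((n+n_1+⋯+n_m)x) dx) / Π_j (λ − (n+n_1+⋯+n_j)²)`. -/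
noncomputable def Rterm (C : ℤ → ℝ) (q : ℝ → ℝ) (Psi : ℝ → ℂ) (n : ℕ) (lam : ℂ)
    (m : ℕ) (v : Fin m → ℤ) : ℂ :=
  if adm n v then
    ((∏ i, (C (v i) : ℂ)) *
        ∫ x in (0:ℝ)..Real.pi,
          (q x : ℂ) * Psi x * (Real.sin (((n : ℝ) + (((∑ i, v i) : ℤ) : ℝ)) * x) : ℂ)) /
      ∏ j, (lam - ((n : ℂ) + ((psum v j : ℤ) : ℂ))^2)
  else 0

/-- `R_m(λ)`, summed over admissible multi-indices in `ℤ^m`. -/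
noncomputable def Rsum (C : ℤ → ℝ) (q : ℝ → ℝ) (Psi : ℝ → ℂ) (n : ℕ) (lam : ℂ)
    (m : ℕ) : ℂ :=
  ∑' v : Fin m → ℤ, Rterm C q Psi n lam m v


lemma hpipi : -Real.pi < Real.pi := by linarith [Real.pi_pos]

noncomputable def ee (k : ℤ) (x : ℝ) : ℂ := Complex.exp ((k : ℂ) * x * Complex.I)

lemma norm_ee (k : ℤ) (x : ℝ) : ‖ee k x‖ = 1 := by
  have : ee k x = Complex.exp (((k * x : ℝ) : ℂ) * Complex.I) := by
    unfold ee; push_cast; rfl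
  rw [this]; exact Complex.norm_exp_ofReal_mul_I _

lemma ee_add (k l : ℤ) (x : ℝ) : ee k x * ee l x = ee (k + l) x := by
  unfold ee; rw [← Complex.exp_add]; congr 1; push_cast; ring

lemma cont_ee (k : ℤ) : Continuous (ee k) := by unfold ee; fun_prop

noncomputable def fc (f : ℝ → ℂ) (k : ℤ) : ℂ := fourierCoeffOn hpipi f k

lemma fc_eq (f : ℝ → ℂ) (k : ℤ) :
    fc f k = (1 / (2 * Real.pi) : ℝ) • ∫ x in (-Real.pi)..Real.pi, ee (-k) x * f x := by
  unfold fc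
  rw [fourierCoeffOn_eq_integral]
  have : Real.pi - -Real.pi = 2 * Real.pi := by ring
  rw [← this]
  congr 2
  · ext x
    rw [smul_eq_mul, fourier_coe_apply]
    congr 1
    unfold ee
    congr 1
    have := Complex.ofReal_ne_zero.mpr Real.pi_ne_zero
    push_cast
    field_simp
    ring

/-- trigonometric series -/
noncomputable def UU (u : ℤ → ℂ) (x : ℝ) : ℂ := ∑' k, u k * ee k x

lemma summable_UU {u : ℤ → ℂ} (hu : Summable fun k => ‖u k‖) (x : ℝ) :
    Summable fun k => u k * ee k x := by
  apply Summable.of_norm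
  simpa [norm_ee] using hu

lemma cont_UU {u : ℤ → ℂ} (hu : Summable fun k => ‖u k‖) : Continuous (UU u) := by
  unfold UU
  refine continuous_tsum (fun k => continuous_const.mul (cont_ee k)) hu ?_
  intro k x
  simp [norm_ee]

lemma norm_UU_le {u : ℤ → ℂ} (hu : Summable fun k => ‖u k‖) (x : ℝ) :
    ‖UU u x‖ ≤ ∑' k, ‖u k‖ := by
  unfold UU
  refine (norm_tsum_le_tsum_norm (by simpa [norm_ee] using hu)).trans ?_
  simp [norm_ee]

lemma fc_hasSum {u : ℤ → ℂ} (hu : Summable fun k => ‖u k‖) (g : ℝ → ℂ) (hg : Measurable g)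
    (B : ℝ) (hB : ∀ x, ‖g x‖ ≤ B) (j : ℤ) :
    HasSum (fun k => u k * fc g (j - k)) (fc (fun x => g x * UU u x) j) := by
  have key : HasSum (fun k => ∫ x in (-Real.pi)..Real.pi, u k * (ee (-(j-k)) x * g x))
      (∫ x in (-Real.pi)..Real.pi, ee (-j) x * (g x * UU u x)) := by
    refine intervalIntegral.hasSum_integral_of_dominated_convergence
      (fun k _ => ‖u k‖ * B) ?_ ?_ ?_ ?_ ?_
    · intro k
      apply Measurable.aestronglyMeasurable
      exact measurable_const.mul ((cont_ee _).measurable.mul hg)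
    · intro k
      refine Eventually.of_forall fun x _ => ?_
      rw [norm_mul, norm_mul, norm_ee, one_mul]
      exact mul_le_mul_of_nonneg_left (hB x) (norm_nonneg _)
    · exact Eventually.of_forall fun x _ => hu.mul_right B
    · exact intervalIntegrable_const
    · refine Eventually.of_forall fun x _ => ?_
      have h := ((summable_UU hu x).hasSum).mul_left (ee (-j) x * g x)
      have e1 : ee (-j) x * (g x * UU u x) = ee (-j) x * g x * ∑' k, u k * ee k x := by
        unfold UU; ring
      rw [e1]
      refine h.congr_fun ?_
      intro k
      have : ee (-(j-k)) x = ee (-j) x * ee k x := by rw [ee_add]; congr 1; ring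
      rw [this]; ring
  rw [fc_eq]
  have h2 := key.const_smul (1 / (2 * Real.pi) : ℝ)
  refine h2.congr_fun ?_
  intro k
  rw [fc_eq, intervalIntegral.integral_const_mul]
  rw [mul_smul_comm]

lemma parseval {u : ℤ → ℂ} (hu : Summable fun k => ‖u k‖) (g : ℝ → ℂ) (hg : Measurable g)
    (B : ℝ) (hB : ∀ x, ‖g x‖ ≤ B) :
    HasSum (fun j => ‖∑' k, u k * fc g (j - k)‖ ^ 2)
      ((2 * Real.pi)⁻¹ * ∫ x in (-Real.pi)..Real.pi, ‖g x * UU u x‖ ^ 2) := by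
  have hm : MemLp (fun x => g x * UU u x) 2 (volume.restrict (Set.Ioc (-Real.pi) Real.pi)) := by
    apply MemLp.of_bound (hg.mul (cont_UU hu).measurable).aestronglyMeasurable
      (B * ∑' k, ‖u k‖)
    refine Eventually.of_forall fun x => ?_
    rw [Pi.mul_apply, norm_mul]
    exact mul_le_mul (hB x) (norm_UU_le hu x) (norm_nonneg _) ((norm_nonneg _).trans (hB x))
  have h := hasSum_sq_fourierCoeffOn hpipi hm
  have e : Real.pi - -Real.pi = 2 * Real.pi := by ring
  rw [e, smul_eq_mul] at h
  refine h.congr_fun ?_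
  intro j
  rw [(fc_hasSum hu g hg B hB j).tsum_eq]; rfl

lemma fc_one (k : ℤ) : fc (fun _ => 1) k = if k = 0 then 1 else 0 := by
  have h : (fun _ : ℝ => (1:ℂ)) = fun x => ee 0 x := by ext x; simp [ee]
  rw [fc_eq]
  have hpi := Complex.ofReal_ne_zero.mpr Real.pi_ne_zero
  split_ifs with hk
  · subst hk
    simp [ee]
    rw [← two_mul]
    field_simp
  · have : (∫ x in (-Real.pi)..Real.pi, ee (-k) x * 1) = 0 := by
      have h1 : ∀ x : ℝ, ee (-k) x * 1 = Complex.exp ((-k * Complex.I) * x) := by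
        intro x; simp [ee]; congr 1; ring
      simp_rw [h1]
      rw [integral_exp_mul_complex]
      · have h3 : Complex.exp ((-k * Complex.I) * (Real.pi:ℝ))
          = Complex.exp ((-k * Complex.I) * ((-Real.pi : ℝ) : ℂ)) := by
          rw [Complex.exp_eq_exp_iff_exists_int]
          refine ⟨-k, ?_⟩
          push_cast; ring
        rw [h3]; simp
      · simp [hk]
    rw [this]; simp

lemma toeplitz {u : ℤ → ℂ} (hu : Summable fun k => ‖u k‖) (g : ℝ → ℂ) (hg : Measurable g)
    (B : ℝ) (hB : ∀ x, ‖g x‖ ≤ B) :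
    Summable (fun j => ‖∑' k, u k * fc g (j - k)‖ ^ 2) ∧ Summable (fun j => ‖u j‖ ^ 2) ∧
    ∑' j, ‖∑' k, u k * fc g (j - k)‖ ^ 2 ≤ B ^ 2 * ∑' j, ‖u j‖ ^ 2 := by
  have h1 := parseval hu g hg B hB
  have h2 := parseval hu (fun _ => 1) measurable_const 1 (by simp)
  have h3 : ∀ j, ∑' k, u k * fc (fun _ => 1) (j - k) = u j := by
    intro j
    rw [tsum_eq_single j]
    · simp [fc_one]
    · intro k hk
      have : j - k ≠ 0 := fun h => hk (by omega)
      simp [fc_one, this]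
  simp_rw [h3, one_mul] at h2
  refine ⟨h1.summable, h2.summable, ?_⟩
  rw [h1.tsum_eq, h2.tsum_eq]
  have hpi := Real.pi_pos
  rw [mul_left_comm]
  refine mul_le_mul_of_nonneg_left ?_ (by positivity)
  rw [← intervalIntegral.integral_const_mul]
  have hc := cont_UU hu
  have hb : ∀ x, ‖g x * UU u x‖ ^ 2 ≤ B ^ 2 * ‖UU u x‖ ^ 2 := by
    intro x
    rw [norm_mul, mul_pow]
    have := hB x
    gcongr
  have hi : IntervalIntegrable (fun x => B ^ 2 * ‖UU u x‖ ^ 2) volume (-Real.pi) Real.pi :=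
    Continuous.intervalIntegrable (by fun_prop) _ _
  refine intervalIntegral.integral_mono_on hpipi.le ?_ hi (fun x _ => hb x)
  refine hi.mono_fun ?_ (Eventually.of_forall fun x => ?_)
  · exact ((hg.mul hc.measurable).norm.pow_const 2).aestronglyMeasurable
  · dsimp only
    rw [Real.norm_of_nonneg (by positivity), Real.norm_of_nonneg (by positivity)]
    exact hb x

noncomputable def DD (n : ℕ) (lam : ℂ) (l : ℤ) : ℂ :=
  if l = n ∨ l = -(n : ℤ) then 0 else (lam - (l : ℂ) ^ 2)⁻¹

noncomputable def FT (C D : ℤ → ℂ) (n : ℤ) (m : ℕ) (W : ℤ → ℂ) (v : Fin m → ℤ) : ℂ :=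
  (∏ i, C (v i)) * (∏ j, D (n + psum v j)) * W (n + ∑ i, v i)

lemma psum_snoc_castSucc {m : ℕ} (v : Fin m → ℤ) (k : ℤ) (j : Fin m) :
    psum (Fin.snoc v k : Fin (m + 1) → ℤ) j.castSucc = psum v j := by
  unfold psum
  rw [Finset.sum_filter, Finset.sum_filter, Fin.sum_univ_castSucc]
  simp

lemma psum_snoc_last {m : ℕ} (v : Fin m → ℤ) (k : ℤ) :
    psum (Fin.snoc v k : Fin (m + 1) → ℤ) (Fin.last m) = (∑ i, v i) + k := by
  unfold psum
  rw [Finset.sum_filter, Fin.sum_univ_castSucc]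
  simp [Fin.le_last]

lemma FT_snoc (C D : ℤ → ℂ) (n : ℤ) (m : ℕ) (W : ℤ → ℂ) (v : Fin m → ℤ) (k : ℤ) :
    FT C D n (m + 1) W (Fin.snoc v k : Fin (m + 1) → ℤ) =
      FT C D n m (fun _ => 1) v *
        (C k * (D (n + (∑ i, v i) + k) * W (n + (∑ i, v i) + k))) := by
  unfold FT
  rw [Fin.prod_univ_castSucc, Fin.prod_univ_castSucc, Fin.sum_univ_castSucc]
  simp only [psum_snoc_castSucc, psum_snoc_last, Fin.snoc_castSucc, Fin.snoc_last]
  rw [← add_assoc]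
  ring

noncomputable def AA (C D : ℤ → ℂ) (W : ℤ → ℂ) (j : ℤ) : ℂ :=
  ∑' k, C k * (D (j + k) * W (j + k))


lemma shift_bound {C D : ℤ → ℂ} {B : ℝ} (hC : ∀ k, ‖C k‖ ≤ B)
    (hD : Summable fun k => ‖D k‖) {W : ℤ → ℂ} {K : ℝ} (hW : ∀ k, ‖W k‖ ≤ K) (j : ℤ) :
    Summable (fun k => ‖C k * (D (j + k) * W (j + k))‖) ∧
    ∑' k, ‖C k * (D (j + k) * W (j + k))‖ ≤ B * K * ∑' k, ‖D k‖ := by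
  have hB : 0 ≤ B := (norm_nonneg _).trans (hC 0)
  have hs : Summable fun k => ‖D (j + k)‖ := (Equiv.addLeft j).summable_iff.mpr hD
  have ht : ∑' k, ‖D (j + k)‖ = ∑' k, ‖D k‖ := (Equiv.addLeft j).tsum_eq (fun k => ‖D k‖)
  have hb : ∀ k, ‖C k * (D (j + k) * W (j + k))‖ ≤ B * K * ‖D (j + k)‖ := by
    intro k
    rw [norm_mul, norm_mul]
    calc _ ≤ B * (‖D (j + k)‖ * K) := by
          have := hC k
          have := hW (j + k)
          gcongr
      _ = _ := by ring
  have h1 := Summable.of_nonneg_of_le (fun _ => norm_nonneg _) hb (hs.mul_left _)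
  refine ⟨h1, ?_⟩
  rw [← ht, ← tsum_mul_left]
  exact h1.tsum_le_tsum hb (hs.mul_left _)

lemma AA_bound {C D : ℤ → ℂ} {B : ℝ} (hC : ∀ k, ‖C k‖ ≤ B)
    (hD : Summable fun k => ‖D k‖) {W : ℤ → ℂ} {K : ℝ} (hW : ∀ k, ‖W k‖ ≤ K) (j : ℤ) :
    ‖AA C D W j‖ ≤ B * K * ∑' k, ‖D k‖ := by
  obtain ⟨h1, h2⟩ := shift_bound hC hD hW j
  exact (norm_tsum_le_tsum_norm h1).trans h2

lemma FT_prod_summable {C D : ℤ → ℂ} {B : ℝ} (hC : ∀ k, ‖C k‖ ≤ B)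
    (hD : Summable fun k => ‖D k‖) (n : ℤ) (m : ℕ)
    (ih : Summable fun v : Fin m → ℤ => ‖FT C D n m (fun _ => 1) v‖)
    {W : ℤ → ℂ} {K : ℝ} (hW : ∀ k, ‖W k‖ ≤ K) :
    Summable fun p : (Fin m → ℤ) × ℤ =>
      ‖FT C D n (m + 1) W (Fin.snoc p.1 p.2 : Fin (m + 1) → ℤ)‖ := by
  rw [summable_prod_of_nonneg (fun _ => norm_nonneg _)]
  simp only [FT_snoc, norm_mul (FT C D n m (fun _ => 1) _)]
  refine ⟨fun v => ((shift_bound hC hD hW _).1).mul_left _, ?_⟩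
  simp only [tsum_mul_left]
  refine Summable.of_nonneg_of_le (fun v => ?_) (fun v => ?_) (ih.mul_right (B * K * ∑' k, ‖D k‖))
  · exact mul_nonneg (norm_nonneg _) (tsum_nonneg fun _ => norm_nonneg _)
  · exact mul_le_mul_of_nonneg_left (shift_bound hC hD hW _).2 (norm_nonneg _)

lemma FT_summable {C D : ℤ → ℂ} {B : ℝ} (hC : ∀ k, ‖C k‖ ≤ B)
    (hD : Summable fun k => ‖D k‖) (n : ℤ) (m : ℕ) :
    ∀ {W : ℤ → ℂ} {K : ℝ} (_ : ∀ k, ‖W k‖ ≤ K),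
    Summable fun v : Fin m → ℤ => ‖FT C D n m W v‖ := by
  induction m with
  | zero => intro W K _; exact Summable.of_finite
  | succ m ih =>
    intro W K hW
    have h := FT_prod_summable hC hD n m (ih (W := fun _ => 1) (K := 1) (by simp)) hW
    rw [← ((Equiv.prodComm _ _).trans (Fin.snocEquiv (fun _ : Fin (m + 1) => ℤ))).summable_iff]
    exact h

lemma FT_step {C D : ℤ → ℂ} {B : ℝ} (hC : ∀ k, ‖C k‖ ≤ B)
    (hD : Summable fun k => ‖D k‖) (n : ℤ) (m : ℕ) {W : ℤ → ℂ} {K : ℝ} (hW : ∀ k, ‖W k‖ ≤ K) :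
    ∑' v, FT C D n (m + 1) W v = ∑' v, FT C D n m (AA C D W) v := by
  have h := FT_prod_summable hC hD n m
    (FT_summable hC hD n m (W := fun _ => 1) (K := 1) (by simp)) hW
  rw [← ((Equiv.prodComm _ _).trans (Fin.snocEquiv (fun _ : Fin (m + 1) => ℤ))).tsum_eq]
  refine (Summable.tsum_prod h.of_norm).trans ?_
  refine tsum_congr fun v => ?_
  simp only [FT_snoc, tsum_mul_left]
  unfold FT AA
  simp

lemma FT_iter {C D : ℤ → ℂ} {B : ℝ} (hC : ∀ k, ‖C k‖ ≤ B)
    (hD : Summable fun k => ‖D k‖) (n : ℤ) (m : ℕ) :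
    ∀ {W : ℤ → ℂ} {K : ℝ} (_ : ∀ k, ‖W k‖ ≤ K),
    ∑' v, FT C D n m W v = ((AA C D)^[m] W) n := by
  induction m with
  | zero => intro W K _; simp [FT]
  | succ m ih =>
    intro W K hW
    rw [FT_step hC hD n m hW, ih (AA_bound hC hD hW)]
    rfl

lemma Rterm_eq (C : ℤ → ℝ) (q : ℝ → ℝ) (Psi : ℝ → ℂ) (n : ℕ) (lam : ℂ)
    (m : ℕ) (v : Fin m → ℤ) :
    Rterm C q Psi n lam m v = FT (fun k => (C k : ℂ)) (DD n lam) n m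
      (fun l => ∫ x in (0:ℝ)..Real.pi, (q x : ℂ) * Psi x * (Real.sin ((l : ℝ) * x) : ℂ)) v := by
  unfold Rterm FT
  have hiff : ∀ j, (psum v j ≠ 0 ∧ psum v j ≠ -(2 * (n : ℤ))) ↔
      ¬ ((n : ℤ) + psum v j = n ∨ (n : ℤ) + psum v j = -(n : ℤ)) := by
    intro j; omega
  split_ifs with h
  · have : ∏ j, DD n lam (n + psum v j) = (∏ j, (lam - ((n : ℂ) + ((psum v j : ℤ) : ℂ))^2))⁻¹ := by
      rw [← Finset.prod_inv_distrib]
      refine Finset.prod_congr rfl fun j _ => ?_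
      unfold DD
      rw [if_neg ((hiff j).1 (h j))]
      push_cast; rfl
    rw [this, div_eq_mul_inv]
    push_cast
    ring
  · unfold adm at h
    push Not at h
    obtain ⟨j, hj⟩ := h
    have : ∏ j, DD n lam (n + psum v j) = 0 := by
      apply Finset.prod_eq_zero (Finset.mem_univ j)
      unfold DD
      rw [if_pos]
      have := hiff j
      tauto
    rw [this]; simp

lemma DD_norm_le (n : ℕ) (lam : ℂ) (M e : ℝ) (hbd : ‖lam - (n : ℂ) ^ 2‖ ≤ M) (l : ℤ)
    (he : M < e) (hl : l ≠ n → l ≠ -(n : ℤ) → e ≤ |(l : ℝ) ^ 2 - (n : ℝ) ^ 2|) :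
    ‖DD n lam l‖ ≤ (e - M)⁻¹ := by
  unfold DD
  have hpos : 0 < e - M := by linarith
  split_ifs with h
  · simp; linarith
  · push Not at h
    have h1 := hl h.1 h.2
    rw [norm_inv]
    apply inv_anti₀ hpos
    have h2 : ‖((l : ℂ) ^ 2 - (n : ℂ) ^ 2)‖ = |(l : ℝ) ^ 2 - (n : ℝ) ^ 2| := by
      rw [← Real.norm_eq_abs, ← Complex.norm_real]; push_cast; rfl
    have h3 : ‖((l : ℂ) ^ 2 - (n : ℂ) ^ 2)‖ ≤ ‖lam - (n : ℂ) ^ 2‖ + ‖lam - (l : ℂ) ^ 2‖ := by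
      have : ((l : ℂ) ^ 2 - (n : ℂ) ^ 2) = (lam - (n : ℂ) ^ 2) - (lam - (l : ℂ) ^ 2) := by ring
      rw [this]; exact norm_sub_le _ _
    linarith

lemma DD_summable (n : ℕ) (lam : ℂ) : Summable fun l => ‖DD n lam l‖ := by
  have hs : Summable fun l : ℤ => 2 * (1 / (l : ℝ) ^ 2) :=
    (Real.summable_one_div_int_pow.mpr (by norm_num : 1 < 2)).mul_left 2
  refine Summable.of_norm_bounded_eventually hs ?_
  obtain ⟨N, hN⟩ := exists_nat_gt (2 * ‖lam‖)
  refine (Set.finite_Icc (-(N : ℤ)) N).subset ?_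
  intro l hl
  by_contra hcon
  apply hl
  have hl2 : 2 * ‖lam‖ < (l : ℝ) ^ 2 := by
    have h1 : (N : ℤ) < |l| := by
      by_contra h
      exact hcon (by rw [Set.mem_Icc]; exact abs_le.mp (by omega))
    have h2 : (N : ℤ) ≤ l ^ 2 := by
      rw [← sq_abs]; nlinarith
    have h3 : (N : ℝ) ≤ (l : ℝ) ^ 2 := by exact_mod_cast h2
    linarith
  change ‖‖DD n lam l‖‖ ≤ 2 * (1 / (l : ℝ) ^ 2)
  rw [norm_norm]
  unfold DD
  have hpos : 0 < (l : ℝ) ^ 2 := lt_of_le_of_lt (by positivity) hl2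
  split_ifs with h
  · simp; positivity
  · rw [norm_inv]
    have h2 : ‖((l : ℂ) ^ 2)‖ = (l : ℝ) ^ 2 := by
      rw [← abs_of_pos hpos, ← Real.norm_eq_abs, ← Complex.norm_real]; push_cast; rfl
    have h3 : ‖((l : ℂ) ^ 2)‖ ≤ ‖lam‖ + ‖lam - (l : ℂ) ^ 2‖ := by
      have : ((l : ℂ) ^ 2) = lam - (lam - (l : ℂ) ^ 2) := by ring
      calc _ = ‖lam - (lam - (l : ℂ) ^ 2)‖ := by rw [← this]
        _ ≤ _ := norm_sub_le _ _
    calc _ ≤ ((l : ℝ) ^ 2 / 2)⁻¹ := by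
          apply inv_anti₀ (by positivity)
          linarith
      _ = _ := by field_simp

noncomputable def gg (a b c : ℝ) (x : ℝ) : ℂ := if |x| ≤ c then (a : ℂ) else (b : ℂ)

lemma gg_meas (a b c : ℝ) : Measurable (gg a b c) := by
  unfold gg
  exact Measurable.ite (measurableSet_le (by fun_prop) measurable_const)
    measurable_const measurable_const

lemma gg_norm (a b c : ℝ) (hb : 0 < b) (x : ℝ) : ‖gg a b c x‖ ≤ max |a| b := by
  unfold gg
  split_ifs
  · simp
  · simp [abs_of_pos hb]

lemma cosCoef_eq (a b c : ℝ) (q : ℝ → ℝ) 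
    (hqa : ∀ x ∈ Set.Icc (0:ℝ) c, q x = a)
    (hqb : ∀ x ∈ Set.Ioc c Real.pi, q x = b) (hb : 0 < b) (k : ℤ) :
    fc (gg a b c) k = (cosCoefR q k : ℂ) := by
  have hpi := Real.pi_pos
  have hi : ∀ x y, ∀ k, IntervalIntegrable (fun x => ee k x * gg a b c x) volume x y := by
    intro x y k
    refine (intervalIntegrable_const (c := max |a| b)).mono_fun ?_ (Eventually.of_forall fun t => ?_)
    · exact ((cont_ee k).measurable.mul (gg_meas a b c)).aestronglyMeasurable
    · dsimp only
      rw [norm_mul, norm_ee, one_mul, Real.norm_of_nonneg (le_max_of_le_right hb.le)]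
      exact gg_norm a b c hb t
  have h1 : ∫ x in (-Real.pi)..0, ee (-k) x * gg a b c x
      = ∫ x in (0:ℝ)..Real.pi, ee k x * gg a b c x := by
    have := intervalIntegral.integral_comp_neg (a := 0) (b := Real.pi)
      (fun x => ee (-k) x * gg a b c x)
    rw [neg_zero] at this
    rw [← this]
    congr 1; ext x
    simp [ee, gg]
  rw [fc_eq, ← intervalIntegral.integral_add_adjacent_intervals (hi _ 0 _) (hi 0 _ _), h1,
    ← intervalIntegral.integral_add (hi _ _ _) (hi _ _ _)]
  unfold cosCoefR
  have h2 : ∫ x in (0:ℝ)..Real.pi, (ee k x * gg a b c x + ee (-k) x * gg a b c x)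
      = ∫ x in (0:ℝ)..Real.pi, ((2 * (q x * Real.cos (k * x)) : ℝ) : ℂ) := by
    refine intervalIntegral.integral_congr fun x hx => ?_
    rw [Set.uIcc_of_le hpi.le] at hx
    have hq : gg a b c x = (q x : ℂ) := by
      unfold gg
      rw [abs_of_nonneg hx.1]
      split_ifs with h
      · rw [hqa x ⟨hx.1, h⟩]
      · rw [hqb x ⟨not_le.mp h, hx.2⟩]
    rw [hq]
    push_cast
    rw [Complex.cos]
    unfold ee
    push_cast
    ring_nf
  rw [h2, intervalIntegral.integral_ofReal, intervalIntegral.integral_const_mul]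
  rw [Complex.real_smul, ← Complex.ofReal_mul]
  congr 1
  field_simp

lemma cosCoef_neg (q : ℝ → ℝ) (k : ℤ) : cosCoefR q (-k) = cosCoefR q k := by
  unfold cosCoefR; simp

lemma fc_zero (a b c : ℝ) (hc : c ∈ Set.Ioo (0:ℝ) Real.pi) 
    (habc : (b - a) * c = b * Real.pi)  (q : ℝ → ℝ)
    (hqa : ∀ x ∈ Set.Icc (0:ℝ) c, q x = a)
    (hqb : ∀ x ∈ Set.Ioc c Real.pi, q x = b) : cosCoefR q 0 = 0 := by
  unfold cosCoefR
  have e1 : Set.EqOn q (fun _ => a) (Set.uIoc 0 c) := by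
    intro x hx
    rw [Set.uIoc_of_le hc.1.le] at hx
    exact hqa x ⟨hx.1.le, hx.2⟩
  have e2 : Set.EqOn q (fun _ => b) (Set.uIoc c Real.pi) := by
    intro x hx
    rw [Set.uIoc_of_le hc.2.le] at hx
    exact hqb x hx
  have i1 : IntervalIntegrable q volume 0 c := (intervalIntegrable_const (c := a)).congr e1.symm
  have i2 : IntervalIntegrable q volume c Real.pi :=
    (intervalIntegrable_const (c := b)).congr e2.symm
  have : ∫ x in (0:ℝ)..Real.pi, q x = 0 := by
    rw [← intervalIntegral.integral_add_adjacent_intervals i1 i2,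
      intervalIntegral.integral_congr_ae (Eventually.of_forall fun x hx => e1 hx),
      intervalIntegral.integral_congr_ae (Eventually.of_forall fun x hx => e2 hx)]
    simp
    linarith
  simp [this]

noncomputable def SS (u : ℤ → ℂ) : ℝ := ∑' l, ‖u l‖ ^ 2

noncomputable def TT (g : ℝ → ℂ) (u : ℤ → ℂ) (j : ℤ) : ℂ := ∑' k, u k * fc g (j - k)

/-- abstract contraction statement -/
lemma contr_big (n : ℕ) (hn : 1 < n) (lam : ℂ) (M : ℝ) (hM0 : 0 < M)
    (hM : M < (2 * (n : ℝ) - 1) / 2) (hbd : ‖lam - (n : ℂ) ^ 2‖ ≤ M)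
    (g : ℝ → ℂ) (hg : Measurable g) (hB : ∀ x, ‖g x‖ ≤ M) :
    ∃ r : ℝ, 0 ≤ r ∧ r < 1 ∧ ∃ N : (ℤ → ℂ) → ℝ, ∀ u : ℤ → ℂ, Summable (fun k => ‖u k‖) →
      SS u ≤ N u ∧ N (fun l => DD n lam l * TT g u l) ≤ r * N u := by
  have hn' : (1:ℝ) < n := by exact_mod_cast hn
  have hd : ∀ l, ‖DD n lam l‖ ≤ (2 * (n : ℝ) - 1 - M)⁻¹ := by
    intro l
    refine DD_norm_le n lam M _ hbd l (by linarith) ?_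
    intro h1 h2
    have h3 : (2 * (n : ℤ) - 1) ≤ |l ^ 2 - (n : ℤ) ^ 2| := by
      have hcase : |l| ≤ n - 1 ∨ (n : ℤ) + 1 ≤ |l| := by
        rcases le_total 0 l with h | h
        · rw [abs_of_nonneg h]; omega
        · rw [abs_of_nonpos h]; omega
      have h0 := abs_nonneg l
      rw [← sq_abs l]
      rcases hcase with h | h
      · rw [abs_sub_comm]
        refine le_trans ?_ (le_abs_self _)
        nlinarith
      · refine le_trans ?_ (le_abs_self _)
        nlinarith
    exact_mod_cast h3
  have hpos : 0 < 2 * (n : ℝ) - 1 - M := by linarith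
  refine ⟨((2 * (n : ℝ) - 1 - M)⁻¹ * M) ^ 2, by positivity, ?_, SS, ?_⟩
  · have : (2 * (n : ℝ) - 1 - M)⁻¹ * M < 1 := by
      rw [inv_mul_lt_iff₀ hpos]; linarith
    have h0 : 0 ≤ (2 * (n : ℝ) - 1 - M)⁻¹ * M := by positivity
    nlinarith
  · intro u hu
    refine ⟨le_rfl, ?_⟩
    obtain ⟨h1, h2, h3⟩ := toeplitz hu g hg M hB
    have hb : ∀ l, ‖DD n lam l * TT g u l‖ ^ 2 ≤ ((2 * (n : ℝ) - 1 - M)⁻¹) ^ 2 * ‖TT g u l‖ ^ 2 := by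
      intro l
      rw [norm_mul, mul_pow]
      have := hd l
      gcongr
    have hsum : Summable fun l => ‖TT g u l‖ ^ 2 := h1
    have hs2 := hsum.mul_left (((2 * (n : ℝ) - 1 - M)⁻¹) ^ 2)
    have h4 := (Summable.of_nonneg_of_le (fun _ => by positivity) hb hs2).tsum_le_tsum hb hs2
    rw [tsum_mul_left] at h4
    unfold SS
    refine h4.trans ?_
    rw [mul_pow, mul_assoc]
    exact mul_le_mul_of_nonneg_left h3 (by positivity)

lemma contr_one (lam : ℂ) (M : ℝ) (hM0 : 0 < M)
    (hM : M ≤ 1 / 2) (hbd : ‖lam - ((1 : ℕ) : ℂ) ^ 2‖ ≤ M)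
    (g : ℝ → ℂ) (hg : Measurable g) (hB : ∀ x, ‖g x‖ ≤ M) (hg0 : fc g 0 = 0) :
    ∃ r : ℝ, 0 ≤ r ∧ r < 1 ∧ ∃ N : (ℤ → ℂ) → ℝ, ∀ u : ℤ → ℂ, Summable (fun k => ‖u k‖) →
      SS u ≤ N u ∧ N (fun l => DD 1 lam l * TT g u l) ≤ r * N u := by
  have hd0 : ‖DD 1 lam 0‖ ≤ 2 := by
    have := DD_norm_le 1 lam (1/2) 1 (hbd.trans hM) 0 (by norm_num) (by norm_num)
    norm_num at this
    exact this
  have hd : ∀ l, l ≠ 0 → ‖DD 1 lam l‖ ≤ 2 / 5 := by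
    intro l hl
    have := DD_norm_le 1 lam (1/2) 3 (hbd.trans hM) l (by norm_num) ?_
    · norm_num at this
      exact this
    intro h1 h2
    have h3 : (3 : ℤ) ≤ |l ^ 2 - 1| := by
      have hcase : l ≤ -2 ∨ 2 ≤ l := by push_cast at h1 h2; omega
      refine le_trans ?_ (le_abs_self _)
      rcases hcase with h | h <;> nlinarith
    push_cast
    rw [one_pow]
    exact_mod_cast h3
  have hup : ∀ u : ℤ → ℂ, Summable (fun k => ‖u k‖) →
      Summable (fun k => ‖Function.update u 0 0 k‖) := by
    intro u hu
    refine Summable.of_nonneg_of_le (fun _ => norm_nonneg _) (fun k => ?_) hu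
    by_cases hk : k = 0
    · subst hk; simp
    · simp [hk]
  have hsplit : ∀ u : ℤ → ℂ, Summable (fun k => ‖u k‖ ^ 2) →
      SS u = ‖u 0‖ ^ 2 + SS (Function.update u 0 0) := by
    intro u hu
    unfold SS
    rw [hu.tsum_eq_add_tsum_ite 0]
    congr 1
    refine tsum_congr fun k => ?_
    by_cases hk : k = 0
    · subst hk; simp
    · simp [hk]
  have hSS0 : ∀ u, 0 ≤ SS u := fun u => tsum_nonneg fun _ => by positivity
  refine ⟨0.54, by norm_num, by norm_num,
    fun u => ‖u 0‖ ^ 2 + 2 * SS (Function.update u 0 0), ?_⟩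
  intro u hu
  obtain ⟨h1, h2, h3⟩ := toeplitz hu g hg M hB
  obtain ⟨k1, k2, k3⟩ := toeplitz (hup u hu) g hg M hB
  have hu2 := hsplit u h2
  have hp := hSS0 (Function.update u 0 0)
  have hMsq : M ^ 2 ≤ 1 / 4 := by nlinarith
  refine ⟨by linarith, ?_⟩
  have hT0 : TT g u 0 = TT g (Function.update u 0 0) 0 := by
    unfold TT
    refine tsum_congr fun k => ?_
    by_cases hk : k = 0
    · subst hk; simp [hg0]
    · simp [hk]
  have hX : ‖DD 1 lam 0 * TT g u 0‖ ^ 2 ≤ SS (Function.update u 0 0) := by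
    have e1 : ‖TT g (Function.update u 0 0) 0‖ ^ 2 ≤ M ^ 2 * SS (Function.update u 0 0) :=
      (k1.le_tsum 0 (fun _ _ => by positivity)).trans k3
    rw [norm_mul, mul_pow, hT0]
    calc _ ≤ 2 ^ 2 * (M ^ 2 * SS (Function.update u 0 0)) := by gcongr
      _ ≤ 2 ^ 2 * (1 / 4 * SS (Function.update u 0 0)) := by gcongr
      _ = _ := by ring
  have hY : SS (Function.update (fun l => DD 1 lam l * TT g u l) 0 0) ≤ 0.04 * SS u := by
    have hb : ∀ l, ‖Function.update (fun l => DD 1 lam l * TT g u l) 0 0 l‖ ^ 2 ≤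
        (2 / 5) ^ 2 * ‖TT g u l‖ ^ 2 := by
      intro l
      by_cases hl : l = 0
      · subst hl; simp; positivity
      · rw [Function.update_of_ne hl, norm_mul, mul_pow]
        have := hd l hl
        gcongr
    have hsum : Summable fun l => ‖TT g u l‖ ^ 2 := h1
    have hs2 := hsum.mul_left ((2 / 5 : ℝ) ^ 2)
    have h4 := (Summable.of_nonneg_of_le (fun _ => by positivity) hb hs2).tsum_le_tsum hb hs2
    rw [tsum_mul_left] at h4
    have h5 : ∑' l, ‖TT g u l‖ ^ 2 ≤ 1 / 4 * SS u :=
      h3.trans (mul_le_mul_of_nonneg_right hMsq (hSS0 u))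
    unfold SS at h5 ⊢
    linarith
  have := sq_nonneg ‖u 0‖
  dsimp only
  linarith

lemma I_bound (M : ℝ) (q : ℝ → ℝ) (lam : ℂ) (Psi : ℝ → ℂ)
    (hq : ∀ x ∈ Set.Icc (0:ℝ) Real.pi, |q x| ≤ M)
    (hev : IsDirichletEigenpair (fun x => (q x : ℂ)) lam Psi) :
    ∃ K : ℝ, ∀ l : ℤ,
      ‖∫ x in (0:ℝ)..Real.pi, (q x : ℂ) * Psi x * (Real.sin ((l : ℝ) * x) : ℂ)‖ ≤ K := by
  obtain ⟨g, -, hg, -, hy, -, h0, -⟩ := hev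
  have hpi := Real.pi_pos
  refine ⟨M * (∫ t in (0:ℝ)..Real.pi, ‖g t‖) * |Real.pi - 0|, fun l => ?_⟩
  refine intervalIntegral.norm_integral_le_of_norm_le_const fun x hx => ?_
  rw [Set.uIoc_of_le hpi.le] at hx
  have hx' : x ∈ Set.Icc 0 Real.pi := ⟨hx.1.le, hx.2⟩
  have h1 : ‖Psi x‖ ≤ ∫ t in (0:ℝ)..Real.pi, ‖g t‖ := by
    rw [hy x hx', h0, zero_add]
    refine (intervalIntegral.norm_integral_le_integral_norm hx'.1).trans ?_
    exact intervalIntegral.integral_mono_interval le_rfl hx'.1 hx'.2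
      (Eventually.of_forall fun _ => norm_nonneg _) hg.norm
  have h2 := hq x hx'
  have hM : 0 ≤ M := (abs_nonneg _).trans h2
  rw [norm_mul, norm_mul, Complex.norm_real, Complex.norm_real, Real.norm_eq_abs, Real.norm_eq_abs]
  have h3 := Real.abs_sin_le_one (l * x)
  have h4 : 0 ≤ |q x| * ‖Psi x‖ := by positivity
  calc _ ≤ |q x| * ‖Psi x‖ * 1 := by gcongr
    _ ≤ _ := by rw [mul_one]; gcongr

/-- For the Kronig–Penney potential, `n ≥ 1` satisfying Condition 1,
a Dirichlet eigenvalue `λ_n` with `|λ_n − n²| ≤ M` and a corresponding normalized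
eigenfunction `Ψ_n`, one has `R_m(λ_n) → 0` as `m → ∞`. -/
theorem stmt11
    (a b c : ℝ) (q : ℝ → ℝ)
    (hc : c ∈ Set.Ioo (0:ℝ) Real.pi) (ha : a < 0) (hb : 0 < b)
    (habc : (b - a) * c = b * Real.pi)
    (hqa : ∀ x ∈ Set.Icc (0:ℝ) c, q x = a)
    (hqb : ∀ x ∈ Set.Ioc c Real.pi, q x = b)
    (n : ℕ) (hn : 1 ≤ n) (hcond : Cond1 (max |a| b) n)
    (lam : ℂ) (Psi : ℝ → ℂ)
    (hev : IsDirichletEigenpair (fun x => (q x : ℂ)) lam Psi)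
    (hbd : ‖lam - ((n : ℂ))^2‖ ≤ max |a| b)
    (hnorm : (∫ x in (0:ℝ)..Real.pi, ‖Psi x‖^2) = 1) :
    Tendsto (fun m : ℕ => Rsum (cosCoefR q) q Psi n lam (m + 1)) atTop (nhds 0) := by
  have hpi := Real.pi_pos
  set M := max |a| b with hMdef
  have hM0 : 0 < M := lt_max_of_lt_right hb
  have hgm := gg_meas a b c
  have hgB : ∀ x, ‖gg a b c x‖ ≤ M := gg_norm a b c hb
  have hfc := cosCoef_eq a b c q hqa hqb hb
  have hcontr : ∃ r : ℝ, 0 ≤ r ∧ r < 1 ∧ ∃ N : (ℤ → ℂ) → ℝ, ∀ u : ℤ → ℂ,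
      Summable (fun k => ‖u k‖) →
      SS u ≤ N u ∧ N (fun l => DD n lam l * TT (gg a b c) u l) ≤ r * N u := by
    rcases Nat.lt_or_ge 1 n with h | h
    · exact contr_big n h lam M hM0 (hcond.2 h) hbd _ hgm hgB
    · obtain rfl : n = 1 := le_antisymm h hn
      refine contr_one lam M hM0 (hcond.1 rfl) hbd _ hgm hgB ?_
      rw [hfc, fc_zero a b c hc habc q hqa hqb]; simp
  obtain ⟨r, hr0, hr1, N, hN⟩ := hcontr
  have hq : ∀ x ∈ Set.Icc (0:ℝ) Real.pi, |q x| ≤ M := by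
    intro x hx
    rcases le_or_gt x c with h | h
    · rw [hqa x ⟨hx.1, h⟩]; exact le_max_left _ _
    · rw [hqb x ⟨h, hx.2⟩, abs_of_pos hb]; exact le_max_right _ _
  obtain ⟨K, hK⟩ := I_bound M q lam Psi hq hev
  set W : ℤ → ℂ := fun l =>
    ∫ x in (0:ℝ)..Real.pi, (q x : ℂ) * Psi x * (Real.sin ((l : ℝ) * x) : ℂ) with hW
  set C : ℤ → ℂ := fun k => (cosCoefR q k : ℂ) with hCdef
  set D := DD n lam with hDdef
  have hD : Summable fun l => ‖D l‖ := DD_summable n lam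
  have hC : ∀ k, ‖C k‖ ≤ M := by
    intro k
    have e : C k = (1 / Real.pi : ℝ) *
        ((∫ x in (0:ℝ)..Real.pi, q x * Real.cos ((k : ℝ) * x) : ℝ) : ℂ) := by
      simp only [hCdef, cosCoefR]; push_cast; rfl
    have h1 : ‖∫ x in (0:ℝ)..Real.pi, q x * Real.cos ((k : ℝ) * x)‖ ≤ M * |Real.pi - 0| := by
      refine intervalIntegral.norm_integral_le_of_norm_le_const fun x hx => ?_
      rw [Set.uIoc_of_le hpi.le] at hx
      rw [norm_mul, Real.norm_eq_abs, Real.norm_eq_abs]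
      have h1 := hq x ⟨hx.1.le, hx.2⟩
      have h2 := Real.abs_cos_le_one (k * x)
      calc _ ≤ M * 1 := by gcongr
        _ = M := mul_one _
    rw [sub_zero, abs_of_pos hpi] at h1
    rw [e, norm_mul, Complex.norm_real, Complex.norm_real, Real.norm_of_nonneg (by positivity)]
    calc _ ≤ 1 / Real.pi * (M * Real.pi) := by gcongr
      _ = M := by field_simp
  have hR : ∀ m, Rsum (cosCoefR q) q Psi n lam m = ((AA C D)^[m] W) n := by
    intro m
    unfold Rsum
    simp_rw [Rterm_eq]
    exact FT_iter hC hD n m hK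
  -- the operator `AA` in terms of `TT`
  have hAA : ∀ w : ℤ → ℂ, AA C D w = TT (gg a b c) (fun l => D l * w l) := by
    intro w
    ext j
    unfold AA TT
    rw [← (Equiv.addLeft j).tsum_eq (fun k => D k * w k * fc (gg a b c) (j - k))]
    refine tsum_congr fun k => ?_
    have : j - (j + k) = -k := by ring
    simp only [Equiv.coe_addLeft, hfc, this, cosCoef_neg, hCdef]
    ring
  have hbdd : ∀ m, ∃ K', ∀ l, ‖((AA C D)^[m] W) l‖ ≤ K' := by
    intro m
    induction m with
    | zero => exact ⟨K, hK⟩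
    | succ m ih =>
      obtain ⟨K', hK'⟩ := ih
      rw [Function.iterate_succ_apply']
      exact ⟨_, AA_bound hC hD hK'⟩
  let u : ℕ → ℤ → ℂ := fun m l => D l * ((AA C D)^[m] W) l
  have hu : ∀ m, Summable fun l => ‖u m l‖ := by
    intro m
    obtain ⟨K', hK'⟩ := hbdd m
    refine Summable.of_nonneg_of_le (fun _ => norm_nonneg _) (fun l => ?_) (hD.mul_right K')
    simp only [u, norm_mul]
    exact mul_le_mul_of_nonneg_left (hK' l) (norm_nonneg _)
  have hsucc : ∀ m, (AA C D)^[m + 1] W = TT (gg a b c) (u m) := by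
    intro m
    rw [Function.iterate_succ_apply', hAA]
  have hNb : ∀ m, N (u m) ≤ N (u 0) * r ^ m := by
    intro m
    induction m with
    | zero => simp
    | succ m ih =>
      have h1 := (hN (u m) (hu m)).2
      have h2 : u (m + 1) = fun l => D l * TT (gg a b c) (u m) l := by
        ext l; simp only [u, ← hsucc]
      rw [h2]
      refine h1.trans ?_
      calc _ ≤ r * (N (u 0) * r ^ m) := by gcongr
        _ = _ := by ring
  have hfin : ∀ m, ‖Rsum (cosCoefR q) q Psi n lam (m + 1)‖ ^ 2 ≤ M ^ 2 * N (u 0) * r ^ m := by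
    intro m
    rw [hR, hsucc]
    obtain ⟨h1, -, h3⟩ := toeplitz (hu m) _ hgm M hgB
    have e1 : ‖TT (gg a b c) (u m) n‖ ^ 2 ≤ M ^ 2 * SS (u m) :=
      (h1.le_tsum (n : ℤ) (fun _ _ => by positivity)).trans h3
    refine e1.trans ?_
    rw [mul_assoc]
    exact mul_le_mul_of_nonneg_left ((hN _ (hu m)).1.trans (hNb m)) (by positivity)
  have hlim : Tendsto (fun m : ℕ => ‖Rsum (cosCoefR q) q Psi n lam (m + 1)‖ ^ 2) atTop (nhds 0) := by
    refine squeeze_zero (fun _ => by positivity) hfin ?_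
    simpa using (tendsto_pow_atTop_nhds_zero_of_lt_one hr0 hr1).const_mul (M ^ 2 * N (u 0))
  rw [tendsto_zero_iff_norm_tendsto_zero]
  have h := hlim.sqrt
  simpa [Real.sqrt_sq (norm_nonneg _)] using h
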